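/- arXiv:0906.4406 — 3 statements merged into one kernel-verified Lean document; each statement's English description precedes it below -/
import Mathlib

section
/- For every compact set K ⊆ O₂ there exists a constant C(K) > 0 such that for every admissible function u, ∫_K |u|² dx dy ≤ C(K) ∫_Ω |∇_{x,y}u|² dx dy. -/
open MeasureTheory Set

/-!
Along a segment the fundamental theorem of calculus bounds the increment of a `C¹` function by the
integral of its gradient. Integrating this over a ball, Fubini's theorem and translation invariance
show that inside a convex part of `U` the `L^p` norms of `u` over two small balls differ by at most
the gradient energy. Since `U` is connected this comparison chains from any ball to any other, and
a compact set is covered by finitely many balls. The chain starts in the strip below the graph of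
`η`, where integrating along vertical lines from the graph, near which `u` vanishes, gives the
Poincaré inequality `∫ ‖u‖ ^ p ≤ h ^ p ∫ ‖∇u‖ ^ p`; the constants do not depend on how near.
-/

open Metric Filter
open scoped ENNReal NNReal Topology

theorem lintegral_rpow_le_measure_univ_rpow_mul {α : Type*} [MeasurableSpace α] {μ : Measure α}
    {g : α → ℝ≥0∞} (hg : AEMeasurable g μ) {p : ℝ} (hp : 1 ≤ p) :
    (∫⁻ a, g a ∂μ) ^ p ≤ μ univ ^ (p - 1) * ∫⁻ a, g a ^ p ∂μ := by
  have hp0 : 0 < p := by linarith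
  have hLp := eLpNorm'_le_eLpNorm'_mul_rpow_measure_univ one_pos hp hg.aestronglyMeasurable
  simp only [eLpNorm', enorm_eq_self, ENNReal.rpow_one, div_one] at hLp
  calc (∫⁻ a, g a ∂μ) ^ p
      ≤ ((∫⁻ a, g a ^ p ∂μ) ^ (1 / p) * μ univ ^ (1 - 1 / p)) ^ p := by gcongr
    _ = μ univ ^ (p - 1) * ∫⁻ a, g a ^ p ∂μ := by
      rw [ENNReal.mul_rpow_of_nonneg _ _ hp0.le, ← ENNReal.rpow_mul, ← ENNReal.rpow_mul,
        one_div_mul_cancel hp0.ne', ENNReal.rpow_one, mul_comm]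
      congr 2
      field_simp

section FundamentalTheorem

variable {E F : Type*} [NormedAddCommGroup E] [NormedSpace ℝ E]
  [NormedAddCommGroup F] [NormedSpace ℝ F] [CompleteSpace F] {p : ℝ}

theorem enorm_sub_rpow_le_lintegral_deriv (hp : 1 ≤ p) {g : ℝ → F} {a b : ℝ} (hab : a ≤ b)
    (hg : ContDiffOn ℝ 1 g (Icc a b)) :
    ‖g b - g a‖ₑ ^ p ≤
      ENNReal.ofReal (b - a) ^ (p - 1) * ∫⁻ t in Icc a b, ‖deriv g t‖ₑ ^ p := by
  borelize F
  calc ‖g b - g a‖ₑ ^ p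
      ≤ (∫⁻ t in Icc a b, ‖deriv g t‖ₑ) ^ p := by
        gcongr
        exact enorm_sub_le_lintegral_deriv_of_contDiffOn_Icc hg hab
    _ ≤ _ := by
        simpa using lintegral_rpow_le_measure_univ_rpow_mul
          (μ := volume.restrict (Icc a b)) (measurable_deriv g).enorm.aemeasurable hp

theorem lintegral_Ioo_enorm_rpow_le (hp : 1 ≤ p) {g : ℝ → F} {a b : ℝ}
    (hg : ContDiffOn ℝ 1 g (Ioo a b)) (hgb : ∀ᶠ y in 𝓝[<] b, g y = 0) :
    ∫⁻ y in Ioo a b, ‖g y‖ₑ ^ p ≤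
      ENNReal.ofReal (b - a) ^ p * ∫⁻ y in Ioo a b, ‖deriv g y‖ₑ ^ p := by
  have hp' : 0 ≤ p - 1 := by linarith
  have pointwise : ∀ y ∈ Ioo a b, ‖g y‖ₑ ^ p ≤
      ENNReal.ofReal (b - a) ^ (p - 1) * ∫⁻ t in Ioo a b, ‖deriv g t‖ₑ ^ p := by
    intro y hy
    obtain ⟨c, hgc, hyc, hcb⟩ := (hgb.and (Ioo_mem_nhdsLT hy.2)).exists
    have hsub : Icc y c ⊆ Ioo a b := fun t ht => ⟨hy.1.trans_le ht.1, ht.2.trans_lt hcb⟩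
    calc ‖g y‖ₑ ^ p = ‖g c - g y‖ₑ ^ p := by rw [hgc, zero_sub, enorm_neg]
      _ ≤ ENNReal.ofReal (c - y) ^ (p - 1) * ∫⁻ t in Icc y c, ‖deriv g t‖ₑ ^ p :=
        enorm_sub_rpow_le_lintegral_deriv hp hyc.le (hg.mono hsub)
      _ ≤ _ := by
        have hay := hy.1
        gcongr
  have hpow : ENNReal.ofReal (b - a) ^ p =
      ENNReal.ofReal (b - a) ^ (p - 1) * ENNReal.ofReal (b - a) := by
    simpa using ENNReal.rpow_add_of_nonneg (x := ENNReal.ofReal (b - a)) (p - 1) 1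
      hp' zero_le_one
  calc ∫⁻ y in Ioo a b, ‖g y‖ₑ ^ p
      ≤ ∫⁻ _ in Ioo a b,
          ENNReal.ofReal (b - a) ^ (p - 1) * ∫⁻ t in Ioo a b, ‖deriv g t‖ₑ ^ p :=
        setLIntegral_mono' measurableSet_Ioo pointwise
    _ = ENNReal.ofReal (b - a) ^ (p - 1) * ENNReal.ofReal (b - a) *
          ∫⁻ t in Ioo a b, ‖deriv g t‖ₑ ^ p := by
        rw [setLIntegral_const, Real.volume_Ioo, mul_right_comm]
    _ = _ := by
        rw [hpow]

theorem enorm_sub_rpow_le_lintegral_segment (hp : 1 ≤ p) {U : Set E} (hU : IsOpen U) {u : E → F}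
    (hu : ContDiffOn ℝ 1 u U) {x y : E} (hxy : segment ℝ x y ⊆ U) :
    ‖u y - u x‖ₑ ^ p ≤
      ‖y - x‖ₑ ^ p * ∫⁻ t in Icc (0 : ℝ) 1, ‖fderiv ℝ u (AffineMap.lineMap x y t)‖ₑ ^ p := by
  have hp0 : 0 ≤ p := by linarith
  have hmaps : MapsTo (AffineMap.lineMap x y) (Icc (0 : ℝ) 1) U := fun t ht =>
    hxy (segment_eq_image_lineMap ℝ x y ▸ mem_image_of_mem _ ht)
  have hcomp : ContDiffOn ℝ 1 (fun t : ℝ => u (AffineMap.lineMap x y t)) (Icc 0 1) :=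
    hu.comp (ContDiff.contDiffOn (by fun_prop)) hmaps
  have hderiv : ∀ t ∈ Icc (0 : ℝ) 1, deriv (fun t : ℝ => u (AffineMap.lineMap x y t)) t =
      fderiv ℝ u (AffineMap.lineMap x y t) (y - x) := fun t ht =>
    (((hu.contDiffAt (hU.mem_nhds (hmaps ht))).differentiableAt one_ne_zero).hasFDerivAt
      |>.comp_hasDerivAt t AffineMap.hasDerivAt_lineMap).deriv
  calc ‖u y - u x‖ₑ ^ p
      ≤ ∫⁻ t in Icc (0 : ℝ) 1, ‖deriv (fun t : ℝ => u (AffineMap.lineMap x y t)) t‖ₑ ^ p := by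
        simpa using enorm_sub_rpow_le_lintegral_deriv hp zero_le_one hcomp
    _ ≤ ∫⁻ t in Icc (0 : ℝ) 1,
          ‖y - x‖ₑ ^ p * ‖fderiv ℝ u (AffineMap.lineMap x y t)‖ₑ ^ p := by
        refine setLIntegral_mono' measurableSet_Icc fun t ht => ?_
        rw [hderiv t ht, ← ENNReal.mul_rpow_of_nonneg _ _ hp0, mul_comm]
        gcongr
        exact ContinuousLinearMap.le_opENorm _ _
    _ = _ := lintegral_const_mul' _ _ (ENNReal.rpow_ne_top_of_nonneg hp0 enorm_ne_top)

end FundamentalTheorem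

section Translation

variable {E F : Type*} [NormedAddCommGroup E] [NormedSpace ℝ E] [MeasurableSpace E] [BorelSpace E]
  [NormedAddCommGroup F] [NormedSpace ℝ F] [CompleteSpace F] {p : ℝ} {U : Set E} {u : E → F}

theorem measurable_enorm_fderiv_rpow (u : E → F) (p : ℝ) :
    Measurable fun x => ‖fderiv ℝ u x‖ₑ ^ p :=
  (measurable_fderiv ℝ u).enorm.pow_const p

variable [SecondCountableTopology E] (μ : Measure E) [SFinite μ] [μ.IsAddRightInvariant]

theorem setLIntegral_enorm_translate_sub_rpow_le (hp : 1 ≤ p) (hU : IsOpen U)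
    (hu : ContDiffOn ℝ 1 u U) {A : Set E} (hA : MeasurableSet A) {v : E}
    (hAU : ∀ x ∈ A, segment ℝ x (x + v) ⊆ U) :
    ∫⁻ x in A, ‖u (x + v) - u x‖ₑ ^ p ∂μ ≤
      ‖v‖ₑ ^ p * ∫⁻ x in U, ‖fderiv ℝ u x‖ₑ ^ p ∂μ := by
  have hDu := measurable_enorm_fderiv_rpow u p
  have hDu_line : Measurable fun z : E × ℝ => ‖fderiv ℝ u (z.1 + z.2 • v)‖ₑ ^ p :=
    hDu.comp (by fun_prop)
  have hslice : ∀ t ∈ Icc (0 : ℝ) 1, ∫⁻ x in A, ‖fderiv ℝ u (x + t • v)‖ₑ ^ p ∂μ ≤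
      ∫⁻ x in U, ‖fderiv ℝ u x‖ₑ ^ p ∂μ := by
    intro t ht
    rw [← (measurePreserving_add_right μ (t • v)).setLIntegral_comp_preimage hU.measurableSet hDu]
    refine lintegral_mono_set fun x hx => hAU x hx ?_
    rw [segment_eq_image']
    exact ⟨t, ht, by simp only [add_sub_cancel_left]⟩
  calc ∫⁻ x in A, ‖u (x + v) - u x‖ₑ ^ p ∂μ
      ≤ ∫⁻ x in A, ‖v‖ₑ ^ p * (∫⁻ t in Icc (0 : ℝ) 1, ‖fderiv ℝ u (x + t • v)‖ₑ ^ p) ∂μ := by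
        refine setLIntegral_mono' hA fun x hx => ?_
        simpa [AffineMap.lineMap_apply, add_comm] using
          enorm_sub_rpow_le_lintegral_segment hp hU hu (hAU x hx)
    _ = ‖v‖ₑ ^ p * ∫⁻ t in Icc (0 : ℝ) 1, (∫⁻ x in A, ‖fderiv ℝ u (x + t • v)‖ₑ ^ p ∂μ) := by
        rw [lintegral_const_mul _ hDu_line.lintegral_prod_right',
          lintegral_lintegral_swap hDu_line.aemeasurable]
    _ ≤ ‖v‖ₑ ^ p * ∫⁻ _ in Icc (0 : ℝ) 1, (∫⁻ x in U, ‖fderiv ℝ u x‖ₑ ^ p ∂μ) := by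
        gcongr ‖v‖ₑ ^ p * ?_
        exact setLIntegral_mono' measurableSet_Icc hslice
    _ = _ := by simp

theorem setLIntegral_ball_enorm_rpow_le (hp : 1 ≤ p) (hU : IsOpen U) (hu : ContDiffOn ℝ 1 u U)
    {V : Set E} (hV : Convex ℝ V) (hVU : V ⊆ U) {x y : E} {r : ℝ} (hx : ball x r ⊆ V)
    (hy : ball y r ⊆ V) :
    ∫⁻ z in ball y r, ‖u z‖ₑ ^ p ∂μ ≤ 2 ^ (p - 1) *
      (∫⁻ z in ball x r, ‖u z‖ₑ ^ p ∂μ +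
        ‖y - x‖ₑ ^ p * ∫⁻ z in U, ‖fderiv ℝ u z‖ₑ ^ p ∂μ) := by
  have hpre : (· + (y - x)) ⁻¹' ball y r = ball x r := by
    ext z; simp
  have hmp := (measurePreserving_add_right μ (y - x)).restrict_preimage
    (measurableSet_ball (x := y) (ε := r))
  rw [hpre] at hmp
  have hmeas : AEMeasurable (fun z => ‖u z‖ₑ ^ p) (μ.restrict (ball x r)) :=
    ((hu.continuousOn.mono (hx.trans hVU)).enorm.aemeasurable measurableSet_ball).pow_const p
  have hseg : ∀ z ∈ ball x r, segment ℝ z (z + (y - x)) ⊆ U := fun z hz =>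
    (hV.segment_subset (hx hz) (hy (hpre.ge hz))).trans hVU
  calc ∫⁻ z in ball y r, ‖u z‖ₑ ^ p ∂μ
      = ∫⁻ z in ball x r, ‖u (z + (y - x))‖ₑ ^ p ∂μ :=
        (hmp.lintegral_comp_emb (measurableEmbedding_addRight _) _).symm
    _ ≤ ∫⁻ z in ball x r, 2 ^ (p - 1) * (‖u z‖ₑ ^ p + ‖u (z + (y - x)) - u z‖ₑ ^ p) ∂μ := by
        refine lintegral_mono fun z => ?_
        refine le_trans ?_ (ENNReal.rpow_add_le_mul_rpow_add_rpow _ _ hp)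
        gcongr
        simpa using enorm_add_le (u z) (u (z + (y - x)) - u z)
    _ = 2 ^ (p - 1) * (∫⁻ z in ball x r, ‖u z‖ₑ ^ p ∂μ +
          ∫⁻ z in ball x r, ‖u (z + (y - x)) - u z‖ₑ ^ p ∂μ) := by
        rw [lintegral_const_mul' _ _ (by finiteness), lintegral_add_left' hmeas]
    _ ≤ _ := by
        gcongr
        exact setLIntegral_enorm_translate_sub_rpow_le μ hp hU hu measurableSet_ball hseg

end Translation

/-- The `L^p` norm over `A` of every `C¹` function `u : U → F` is controlled, uniformly in `u`, by
its `L^p` norm over `B` and the `L^p` norm of its gradient over `U`. The inequality is stated for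
the `p`-th powers of these norms, which may be infinite. -/
def GradientControlled {E : Type*} [NormedAddCommGroup E] [NormedSpace ℝ E] [MeasurableSpace E]
    (F : Type*) [NormedAddCommGroup F] [NormedSpace ℝ F] (μ : Measure E) (p : ℝ)
    (U B A : Set E) : Prop :=
  ∃ C : ℝ≥0, ∀ u : E → F, ContDiffOn ℝ 1 u U →
    ∫⁻ x in A, ‖u x‖ₑ ^ p ∂μ ≤
      C * (∫⁻ x in B, ‖u x‖ₑ ^ p ∂μ + ∫⁻ x in U, ‖fderiv ℝ u x‖ₑ ^ p ∂μ)

namespace GradientControlled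

variable {E F : Type*} [NormedAddCommGroup E] [NormedSpace ℝ E] [MeasurableSpace E]
  [NormedAddCommGroup F] [NormedSpace ℝ F] {μ : Measure E} {p : ℝ}
  {U V A A' B B' K : Set E} {x y : E} {r : ℝ}

theorem mono (h : GradientControlled F μ p U B A) (hB : B ⊆ B') (hA : A' ⊆ A) :
    GradientControlled F μ p U B' A' := by
  obtain ⟨C, hC⟩ := h
  refine ⟨C, fun u hu => (lintegral_mono_set hA).trans ((hC u hu).trans ?_)⟩
  gcongr

theorem empty : GradientControlled F μ p U B ∅ := ⟨0, fun u _ => by simp⟩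

theorem union (h : GradientControlled F μ p U B A) (h' : GradientControlled F μ p U B A') :
    GradientControlled F μ p U B (A ∪ A') := by
  obtain ⟨C, hC⟩ := h
  obtain ⟨C', hC'⟩ := h'
  refine ⟨C + C', fun u hu => (lintegral_union_le _ _ _).trans ?_⟩
  rw [ENNReal.coe_add, add_mul]
  exact add_le_add (hC u hu) (hC' u hu)

theorem trans {D : Set E} (hDB : GradientControlled F μ p U D B)
    (hBA : GradientControlled F μ p U B A) : GradientControlled F μ p U D A := by
  obtain ⟨C, hC⟩ := hDB
  obtain ⟨C', hC'⟩ := hBA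
  refine ⟨C' * (C + 1), fun u hu => (hC' u hu).trans ?_⟩
  rw [ENNReal.coe_mul, mul_assoc]
  gcongr
  rw [ENNReal.coe_add, ENNReal.coe_one, add_mul, one_mul]
  exact add_le_add (hC u hu) le_add_self

variable [BorelSpace E] [SecondCountableTopology E] [SFinite μ] [μ.IsAddRightInvariant]
  [CompleteSpace F]

theorem ball_of_convex (hp : 1 ≤ p) (hU : IsOpen U) (hV : Convex ℝ V) (hVU : V ⊆ U)
    (hx : ball x r ⊆ V) (hy : ball y r ⊆ V) :
    GradientControlled F μ p U (ball x r) (ball y r) := by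
  have hp' : 0 ≤ p - 1 := by linarith
  have hp0 : 0 ≤ p := by linarith
  refine ⟨2 ^ (p - 1) * (1 + ‖y - x‖₊ ^ p), fun u hu =>
    (setLIntegral_ball_enorm_rpow_le μ hp hU hu hV hVU hx hy).trans ?_⟩
  push_cast [ENNReal.coe_rpow_of_nonneg _ hp', ENNReal.coe_rpow_of_nonneg _ hp0]
  rw [mul_assoc, mul_add (1 + _)]
  gcongr
  · exact le_mul_of_one_le_left' le_self_add
  · exact le_add_self

theorem exists_ball_of_convex (hp : 1 ≤ p) (hU : IsOpen U) (hV : Convex ℝ V) (hV' : IsOpen V)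
    (hVU : V ⊆ U) (hx : x ∈ V) (hy : y ∈ V) (hr : 0 < r) :
    ∃ s > 0, GradientControlled F μ p U (ball x r) (ball y s) := by
  obtain ⟨rx, hrx, hxV⟩ := isOpen_iff.1 hV' x hx
  obtain ⟨ry, hry, hyV⟩ := isOpen_iff.1 hV' y hy
  refine ⟨min r (min rx ry), by positivity, ?_⟩
  refine (ball_of_convex hp hU hV hVU ((ball_subset_ball ?_).trans hxV)
    ((ball_subset_ball ?_).trans hyV)).mono (ball_subset_ball (min_le_left _ _)) subset_rfl
  · exact (min_le_right _ _).trans (min_le_left _ _)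
  · exact (min_le_right _ _).trans (min_le_right _ _)

theorem exists_ball_of_isPreconnected (hp : 1 ≤ p) (hU : IsOpen U) (hUc : IsPreconnected U)
    (hx : x ∈ U) (hy : y ∈ U) (hr : 0 < r) :
    ∃ s > 0, GradientControlled F μ p U (ball x r) (ball y s) := by
  refine hUc.induction₂' (fun x y => ∀ r > 0, ∃ s > 0,
    GradientControlled F μ p U (ball x r) (ball y s)) ?locally ?chain hx hy r hr
  case locally =>
    intro x hx
    obtain ⟨R, hR, hRU⟩ := isOpen_iff.1 hU x hx
    filter_upwards [mem_nhdsWithin_of_mem_nhds (ball_mem_nhds x hR)] with y hy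
    have hx : x ∈ ball x R := mem_ball_self hR
    exact ⟨fun r => exists_ball_of_convex hp hU (convex_ball x R) isOpen_ball hRU hx hy,
      fun r => exists_ball_of_convex hp hU (convex_ball x R) isOpen_ball hRU hy hx⟩
  case chain =>
    intro x y z _ _ _ hxy hyz r hr
    obtain ⟨s, hs, hrs⟩ := hxy r hr
    obtain ⟨t, ht, hst⟩ := hyz s hs
    exact ⟨t, ht, hrs.trans hst⟩

theorem of_isCompact (hp : 1 ≤ p) (hU : IsOpen U) (hUc : IsPreconnected U) (hB : IsOpen B)
    (hBU : (U ∩ B).Nonempty) (hK : IsCompact K) (hKU : K ⊆ U) :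
    GradientControlled F μ p U B K := by
  obtain ⟨x, hxU, hxB⟩ := hBU
  obtain ⟨r, hr, hrB⟩ := isOpen_iff.1 hB x hxB
  refine hK.induction_on (p := GradientControlled F μ p U B) empty
    (fun _ _ hst ht => ht.mono subset_rfl hst) (fun _ _ => union) fun y hy => ?_
  obtain ⟨s, hs, hctrl⟩ :=
    exists_ball_of_isPreconnected (F := F) (μ := μ) hp hU hUc hxU (hKU hy) hr
  exact ⟨ball y s, mem_nhdsWithin_of_mem_nhds (ball_mem_nhds y hs), hctrl.mono hrB subset_rfl⟩

end GradientControlled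

section Strip

theorem isOpen_regionBetween_univ {α : Type*} [TopologicalSpace α] {f g : α → ℝ}
    (hf : Continuous f) (hg : Continuous g) : IsOpen (regionBetween f g univ) := by
  simp only [regionBetween, mem_univ, true_and, mem_Ioo]
  exact (isOpen_lt (hf.comp continuous_fst) continuous_snd).inter
    (isOpen_lt continuous_snd (hg.comp continuous_fst))

theorem setLIntegral_regionBetween {α : Type*} [MeasurableSpace α] {μ : Measure α} [SFinite μ]
    {f g : α → ℝ} {s : Set α} (hf : Measurable f) (hg : Measurable g) (hs : MeasurableSet s)
    {φ : α × ℝ → ℝ≥0∞}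
    (hφ : AEMeasurable φ ((μ.prod volume).restrict (regionBetween f g s))) :
    ∫⁻ z in regionBetween f g s, φ z ∂μ.prod volume =
      ∫⁻ x in s, (∫⁻ y in Ioo (f x) (g x), φ (x, y)) ∂μ := by
  have hR := measurableSet_regionBetween hf hg hs
  rw [← lintegral_indicator hR, lintegral_prod _ ((aemeasurable_indicator_iff hR).2 hφ),
    ← lintegral_indicator hs]
  refine lintegral_congr fun x => ?_
  by_cases hx : x ∈ s
  · rw [indicator_of_mem hx, ← lintegral_indicator measurableSet_Ioo]
    simp [indicator, regionBetween, hx]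
  · simp [indicator, regionBetween, hx]

variable {X F : Type*} [NormedAddCommGroup X] [NormedSpace ℝ X]
  [NormedAddCommGroup F] [NormedSpace ℝ F]

theorem enorm_deriv_slice_le_enorm_fderiv {u : X × ℝ → F} {x : X} {y : ℝ}
    (hu : DifferentiableAt ℝ u (x, y)) :
    ‖deriv (fun y => u (x, y)) y‖ₑ ≤ ‖fderiv ℝ u (x, y)‖ₑ := by
  have hderiv : HasDerivAt (fun y => u (x, y)) (fderiv ℝ u (x, y) (0, 1)) y :=
    hu.hasFDerivAt.comp_hasDerivAt y ((hasDerivAt_const y x).prodMk (hasDerivAt_id y))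
  rw [hderiv.deriv]
  refine (ContinuousLinearMap.le_opENorm _ _).trans_eq ?_
  simp [← ofReal_norm]

variable [MeasurableSpace X] [BorelSpace X] [CompleteSpace F] {p : ℝ} {U : Set (X × ℝ)}
  (μ : Measure X) [SFinite μ]

theorem setLIntegral_regionBetween_enorm_rpow_le (hp : 1 ≤ p) {f g : X → ℝ} {s : Set X} {h : ℝ}
    (hf : Measurable f) (hg : Measurable g) (hs : MeasurableSet s)
    (hfg : ∀ x ∈ s, g x - f x ≤ h) (hU : IsOpen U) (hsub : regionBetween f g s ⊆ U)
    {u : X × ℝ → F} (hu : ContDiffOn ℝ 1 u U)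
    (hug : ∀ x ∈ s, ∀ᶠ y in 𝓝[<] g x, u (x, y) = 0) :
    ∫⁻ z in regionBetween f g s, ‖u z‖ₑ ^ p ∂μ.prod volume ≤
      ENNReal.ofReal h ^ p *
        ∫⁻ z in regionBetween f g s, ‖fderiv ℝ u z‖ₑ ^ p ∂μ.prod volume := by
  have hp0 : 0 ≤ p := by linarith
  have hu_meas : AEMeasurable (fun z => ‖u z‖ₑ ^ p)
      ((μ.prod volume).restrict (regionBetween f g s)) :=
    ((hu.continuousOn.mono hsub).enorm.aemeasurable
      (measurableSet_regionBetween hf hg hs)).pow_const p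
  have hslice : ∀ x ∈ s, ∫⁻ y in Ioo (f x) (g x), ‖u (x, y)‖ₑ ^ p ≤
      ENNReal.ofReal h ^ p * ∫⁻ y in Ioo (f x) (g x), ‖fderiv ℝ u (x, y)‖ₑ ^ p := by
    intro x hx
    have hmaps : MapsTo (fun y => (x, y)) (Ioo (f x) (g x)) U := fun y hy => hsub ⟨hx, hy⟩
    refine (lintegral_Ioo_enorm_rpow_le hp
      (hu.comp (contDiff_prodMk_right x).contDiffOn hmaps) (hug x hx)).trans ?_
    gcongr ?_ * ?_
    · gcongr
      exact hfg x hx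
    · refine setLIntegral_mono' measurableSet_Ioo fun y hy => ?_
      gcongr
      exact enorm_deriv_slice_le_enorm_fderiv
        ((hu.contDiffAt (hU.mem_nhds (hmaps hy))).differentiableAt one_ne_zero)
  rw [setLIntegral_regionBetween hf hg hs hu_meas,
    setLIntegral_regionBetween hf hg hs (measurable_enorm_fderiv_rpow u p).aemeasurable,
    ← lintegral_const_mul' _ _ (by finiteness)]
  exact setLIntegral_mono' hs hslice

theorem poincare_compact_general [SecondCountableTopology X] [μ.IsAddRightInvariant] (hp : 1 ≤ p)
    {η : X → ℝ} (hη : Continuous η) {h : ℝ} (hh : 0 < h) (hU : IsOpen U) (hUc : IsPreconnected U)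
    (hstrip : regionBetween (fun x => η x - h) η univ ⊆ U)
    {K : Set (X × ℝ)} (hK : IsCompact K) (hKU : K ⊆ U) :
    ∃ C > (0 : ℝ), ∀ u : X × ℝ → F, ContDiffOn ℝ 1 u U →
      (∀ x, ∀ᶠ y in 𝓝[<] η x, u (x, y) = 0) →
      ∫⁻ z in K, ‖u z‖ₑ ^ p ∂μ.prod volume ≤
        ENNReal.ofReal C * ∫⁻ z in U, ‖fderiv ℝ u z‖ₑ ^ p ∂μ.prod volume := by
  have hηh : Continuous fun x => η x - h := by fun_prop
  have hnonempty : (U ∩ regionBetween (fun x => η x - h) η univ).Nonempty := by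
    have hmem : ((0 : X), η 0 - h / 2) ∈ regionBetween (fun x => η x - h) η univ :=
      ⟨mem_univ _, by linarith, by linarith⟩
    exact ⟨_, hstrip hmem, hmem⟩
  obtain ⟨C, hC⟩ : GradientControlled F (μ.prod volume) p U _ K :=
    .of_isCompact hp hU hUc (isOpen_regionBetween_univ hηh hη) hnonempty hK hKU
  refine ⟨(C + 1) * (h ^ p + 1), by positivity, fun u hu hu0 => ?_⟩
  calc ∫⁻ z in K, ‖u z‖ₑ ^ p ∂μ.prod volume
      ≤ C * (∫⁻ z in regionBetween (fun x => η x - h) η univ, ‖u z‖ₑ ^ p ∂μ.prod volume +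
          ∫⁻ z in U, ‖fderiv ℝ u z‖ₑ ^ p ∂μ.prod volume) := hC u hu
    _ ≤ C * (ENNReal.ofReal h ^ p * ∫⁻ z in U, ‖fderiv ℝ u z‖ₑ ^ p ∂μ.prod volume +
          ∫⁻ z in U, ‖fderiv ℝ u z‖ₑ ^ p ∂μ.prod volume) := by
        gcongr
        refine (setLIntegral_regionBetween_enorm_rpow_le μ hp hηh.measurable hη.measurable .univ
          (fun x _ => (sub_sub_cancel (η x) h).le) hU hstrip hu fun x _ => hu0 x).trans ?_
        gcongr
    _ = C * (ENNReal.ofReal h ^ p + 1) * ∫⁻ z in U, ‖fderiv ℝ u z‖ₑ ^ p ∂μ.prod volume := by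
        rw [mul_assoc, add_mul, one_mul]
    _ ≤ _ := by
        rw [ENNReal.ofReal_mul (by positivity), ENNReal.ofReal_add (by positivity) zero_le_one,
          ENNReal.ofReal_add (by positivity) zero_le_one, ENNReal.ofReal_coe_nnreal,
          ENNReal.ofReal_one, ENNReal.ofReal_rpow_of_pos hh]
        gcongr
        exact le_self_add

end Strip

/-- Local `L²` control on compact subsets of the region `O₂` below the strip, in terms of
the Dirichlet energy, for functions vanishing near the top boundary. -/
theorem poincare_compact
    (d : ℕ) (hd : 1 ≤ d)
    (η : EuclideanSpace ℝ (Fin d) → ℝ) (hη : Continuous η)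
    (h : ℝ) (hh : 0 < h)
    (Ω₂ : Set (EuclideanSpace ℝ (Fin d) × ℝ)) (hΩ₂ : IsOpen Ω₂)
    (hstrip : {p : EuclideanSpace ℝ (Fin d) × ℝ | η p.1 - h ≤ p.2 ∧ p.2 ≤ η p.1} ⊆ Ω₂)
    (Ω : Set (EuclideanSpace ℝ (Fin d) × ℝ))
    (hΩ : Ω = {p : EuclideanSpace ℝ (Fin d) × ℝ | p.2 < η p.1} ∩ Ω₂)
    (hconn : IsConnected Ω)
    (K : Set (EuclideanSpace ℝ (Fin d) × ℝ)) (hK : IsCompact K)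
    (hKO₂ : K ⊆ {p ∈ Ω | p.2 < η p.1 - h}) :
    ∃ C > (0 : ℝ), ∀ u : EuclideanSpace ℝ (Fin d) × ℝ → ℝ,
      ContDiffOn ℝ 1 u Ω →
      (∫⁻ p in Ω, ENNReal.ofReal (‖fderiv ℝ u p‖ ^ 2)) < ⊤ →
      (∃ ε ∈ Ioo (0 : ℝ) h, ∀ p ∈ Ω, η p.1 - ε < p.2 → u p = 0) →
      ∫⁻ p in K, ENNReal.ofReal (u p ^ 2)
        ≤ ENNReal.ofReal C * ∫⁻ p in Ω, ENNReal.ofReal (‖fderiv ℝ u p‖ ^ 2) := by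
  subst hΩ
  have hΩ_open := (isOpen_lt continuous_snd (hη.comp continuous_fst)).inter hΩ₂
  obtain ⟨C, hC, hbound⟩ := poincare_compact_general (F := ℝ) (p := 2) volume one_le_two hη hh
    hΩ_open hconn.isPreconnected (fun z hz => ⟨hz.2.2, hstrip ⟨hz.2.1.le, hz.2.2.le⟩⟩) hK
    (hKO₂.trans (sep_subset _ _))
  refine ⟨C, hC, fun u hu _ ⟨ε, ⟨hε, _⟩, hu0⟩ => ?_⟩
  have hu_near : ∀ x, ∀ᶠ y in 𝓝[<] η x, u (x, y) = 0 := fun x => by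
    filter_upwards [Ioo_mem_nhdsLT (sub_lt_self (η x) hε)] with y hy
    exact hu0 (x, y) ⟨hy.2, hstrip ⟨by linarith [hy.1], hy.2.le⟩⟩ hy.1
  simpa [Measure.volume_eq_prod, ← ofReal_norm, ← ENNReal.ofReal_pow] using hbound u hu hu_near
end

section
/- There exist a measurable, locally bounded function g : Ω → ℝ with g(x,y) > 0 for all (x,y) ∈ Ω and g = 1 on O₁, and a constant C > 0, such that for every admissible function u one has the weighted Poincaré inequality ∫_Ω g(x,y) |u(x,y)|² dx dy ≤ C ∫_Ω |∇_{x,y}u(x,y)|² dx dy. -/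
open MeasureTheory Set

/-!
In the `L^p` norm, a translation by `w` moves a `C¹` function by at most `‖w‖` times its gradient.
Translating the strip upwards by `h` pushes it above the graph, where admissible functions, extended
by zero, vanish: this is the Poincaré inequality on the strip. Translating small balls by a small
vector shows that the set of points having a neighbourhood on which a Poincaré inequality holds is
relatively closed in `Ω`; being open and nonempty, it is all of `Ω`. Countably many of these
neighbourhoods cover `Ω`, and a weight that decays fast enough along the cover makes their
inequalities summable.
-/

open Filter Topology Metric
open scoped ENNReal NNReal

theorem rpow_lintegral_le_lintegral_rpow {α : Type*} [MeasurableSpace α] {μ : Measure α}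
    [IsProbabilityMeasure μ] {p : ℝ} (hp : 1 ≤ p) {f : α → ℝ≥0∞} (hf : AEMeasurable f μ) :
    (∫⁻ a, f a ∂μ) ^ p ≤ ∫⁻ a, f a ^ p ∂μ := by
  have hp₀ : 0 < p := one_pos.trans_le hp
  have h := eLpNorm'_le_eLpNorm'_of_exponent_le one_pos hp μ hf.aestronglyMeasurable
  simpa [eLpNorm'_eq_lintegral_enorm, ENNReal.le_rpow_inv_iff hp₀] using h

theorem ofReal_sq_eq_enorm_sq (x : ℝ) : ENNReal.ofReal (x ^ 2) = ‖x‖ₑ ^ 2 := by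
  rw [← sq_abs, ← Real.norm_eq_abs, ENNReal.ofReal_pow (norm_nonneg x), ofReal_norm]

section Weight

variable {α ι κ : Type*} [MeasurableSpace α] {μ : Measure α}
  {f : ι → α → ℝ≥0∞} {I : ι → ℝ≥0∞}

theorem exists_weight_of_countable [Countable κ] {A : κ → Set α} (hA : ∀ k, MeasurableSet (A k))
    (hf : ∀ i, AEMeasurable (f i) μ) {K : κ → ℝ≥0}
    (hK : ∀ k i, ∫⁻ x in A k, f i x ∂μ ≤ K k * I i) :
    ∃ G : α → ℝ≥0, Measurable G ∧ (∀ x, G x ≤ 1) ∧ (∀ k, ∀ x ∈ A k, 0 < G x) ∧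
      ∀ i, ∫⁻ x, G x * f i x ∂μ ≤ I i := by
  obtain ⟨δ, hδ, hsum⟩ := ENNReal.exists_pos_tsum_mul_lt_of_countable one_ne_zero
    (fun k ↦ (K k + 1 : ℝ≥0∞)) (fun k ↦ by simp)
  let H : α → ℝ≥0∞ := fun x ↦ ∑' k, (A k).indicator (fun _ ↦ (δ k : ℝ≥0∞)) x
  have hHm : Measurable H := .tsum fun k ↦ measurable_const.indicator (hA k)
  have hH1 : ∀ x, H x ≤ 1 := fun x ↦ calc
    H x ≤ ∑' k, (K k + 1) * (δ k : ℝ≥0∞) := ENNReal.tsum_le_tsum fun k ↦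
      (indicator_le_self _ _ x).trans (le_mul_of_one_le_left zero_le le_add_self)
    _ ≤ 1 := hsum.le
  have hHtop : ∀ x, H x ≠ ∞ := fun x ↦ ne_top_of_le_ne_top ENNReal.one_ne_top (hH1 x)
  have hHpos : ∀ k, ∀ x ∈ A k, 0 < H x := fun k x hx ↦ by
    refine lt_of_lt_of_le ?_ (ENNReal.le_tsum k)
    simpa only [indicator_of_mem hx, ENNReal.coe_pos] using hδ k
  refine ⟨fun x ↦ (H x).toNNReal, hHm.ennreal_toNNReal,
    fun x ↦ by simpa using ENNReal.toNNReal_mono ENNReal.one_ne_top (hH1 x),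
    fun k x hx ↦ ENNReal.toNNReal_pos (hHpos k x hx).ne' (hHtop x), fun i ↦ ?_⟩
  calc ∫⁻ x, (H x).toNNReal * f i x ∂μ
      = ∫⁻ x, ∑' k, δ k * (A k).indicator (f i) x ∂μ := by
        refine lintegral_congr fun x ↦ ?_
        rw [ENNReal.coe_toNNReal (hHtop x)]
        refine ENNReal.tsum_mul_right.symm.trans (tsum_congr fun k ↦ ?_)
        by_cases hx : x ∈ A k <;> simp [hx]
    _ = ∑' k, δ k * ∫⁻ x in A k, f i x ∂μ := by
        rw [lintegral_tsum fun k ↦ ((hf i).indicator (hA k)).const_mul _]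
        simp_rw [lintegral_const_mul' _ _ ENNReal.coe_ne_top, lintegral_indicator (hA _)]
    _ ≤ ∑' k, (K k + 1) * δ k * I i := ENNReal.tsum_le_tsum fun k ↦ by
        rw [mul_comm _ (δ k : ℝ≥0∞), mul_assoc]
        gcongr
        exact (hK k i).trans (by gcongr; exact le_self_add)
    _ ≤ I i := by
        rw [ENNReal.tsum_mul_right]
        exact mul_le_of_le_one_left zero_le hsum.le

variable [TopologicalSpace α] [SecondCountableTopology α] [OpensMeasurableSpace α]

theorem exists_weight_of_forall_mem_nhds {Ω : Set α} (hf : ∀ i, AEMeasurable (f i) (μ.restrict Ω))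
    (h : ∀ x ∈ Ω, ∃ A ∈ 𝓝 x, ∃ K : ℝ≥0, ∀ i, ∫⁻ y in A, f i y ∂μ ≤ K * I i) :
    ∃ G : α → ℝ≥0, Measurable G ∧ (∀ x, G x ≤ 1) ∧ (∀ x ∈ Ω, 0 < G x) ∧
      ∀ i, ∫⁻ x in Ω, G x * f i x ∂μ ≤ I i := by
  choose! A hA K hK using h
  obtain ⟨T, hTΩ, hT, hcover⟩ := TopologicalSpace.countable_cover_nhdsWithin
    (fun x hx ↦ mem_nhdsWithin_of_mem_nhds (interior_mem_nhds.2 (hA x hx)))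
  have := hT.to_subtype
  obtain ⟨G, hGm, hG1, hGpos, hG⟩ := exists_weight_of_countable (μ := μ.restrict Ω)
    (A := fun x : T ↦ interior (A x)) (fun x ↦ measurableSet_interior) hf
    (K := fun x : T ↦ K x) fun x i ↦ calc
      ∫⁻ y in interior (A x), f i y ∂μ.restrict Ω ≤ ∫⁻ y in A x, f i y ∂μ :=
        lintegral_mono' (Measure.restrict_mono' (ae_of_all _ interior_subset)
          Measure.restrict_le_self) le_rfl
      _ ≤ K x * I i := hK x (hTΩ x.2) i
  refine ⟨G, hGm, hG1, fun x hx ↦ ?_, hG⟩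
  obtain ⟨y, hyT, hxy⟩ := mem_iUnion₂.1 (hcover hx)
  exact hGpos ⟨y, hyT⟩ x hxy

theorem exists_weight_eq_one_on {Ω O : Set α} (hO : MeasurableSet O)
    (hf : ∀ i, AEMeasurable (f i) (μ.restrict Ω))
    (h : ∀ x ∈ Ω, ∃ A ∈ 𝓝 x, ∃ K : ℝ≥0, ∀ i, ∫⁻ y in A, f i y ∂μ ≤ K * I i)
    (hOI : ∃ K : ℝ≥0, ∀ i, ∫⁻ y in O, f i y ∂μ ≤ K * I i) :
    ∃ g : α → ℝ≥0, ∃ C > (0 : ℝ≥0), Measurable g ∧ (∀ x, g x ≤ 1) ∧ (∀ x ∈ Ω, 0 < g x) ∧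
      (∀ x ∈ O, g x = 1) ∧ ∀ i, ∫⁻ x in Ω, g x * f i x ∂μ ≤ C * I i := by
  classical
  obtain ⟨G, hGm, hG1, hGpos, hG⟩ := exists_weight_of_forall_mem_nhds hf h
  obtain ⟨K, hK⟩ := hOI
  refine ⟨O.piecewise (fun _ ↦ 1) G, K + 1, by positivity, measurable_const.piecewise hO hGm,
    fun x ↦ by by_cases hxO : x ∈ O <;> simp [hxO, hG1 x],
    fun x hx ↦ by by_cases hxO : x ∈ O <;> simp [hxO, hGpos x hx],
    fun x hx ↦ piecewise_eq_of_mem _ _ _ hx, fun i ↦ ?_⟩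
  calc ∫⁻ x in Ω, O.piecewise (fun _ ↦ 1) G x * f i x ∂μ
      ≤ ∫⁻ x in Ω, (O.indicator (f i) x + G x * f i x) ∂μ := lintegral_mono fun x ↦ by
        by_cases hxO : x ∈ O <;> simp [hxO]
    _ = ∫⁻ x in Ω, O.indicator (f i) x ∂μ + ∫⁻ x in Ω, G x * f i x ∂μ :=
        lintegral_add_left' ((hf i).indicator hO) _
    _ ≤ ∫⁻ x in O, f i x ∂μ + ∫⁻ x in Ω, G x * f i x ∂μ := by
        gcongr ?_ + _
        rw [← lintegral_indicator hO]
        exact setLIntegral_le_lintegral _ _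
    _ ≤ (K + 1 : ℝ≥0) * I i := by
        rw [ENNReal.coe_add, add_mul, ENNReal.coe_one, one_mul]
        exact add_le_add (hK i) (hG i)

end Weight

section ExtendByZero

theorem eqOn_indicator_zero_of_eqOn_inter {α M : Type*} [Zero M] {u : α → M} {U W : Set α}
    (h : EqOn u 0 (U ∩ W)) : EqOn (U.indicator u) 0 W :=
  fun _ hz ↦ indicator_apply_eq_zero.2 fun hzU ↦ h ⟨hzU, hz⟩

variable {𝕜 E F : Type*} [NontriviallyNormedField 𝕜] [NormedAddCommGroup E] [NormedSpace 𝕜 E]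
  [NormedAddCommGroup F] [NormedSpace 𝕜 F] {u : E → F} {U W : Set E}

theorem contDiffOn_indicator_union {n : WithTop ℕ∞} (hu : ContDiffOn 𝕜 n u U) (hU : IsOpen U)
    (hW : IsOpen W) (h : EqOn u 0 (U ∩ W)) : ContDiffOn 𝕜 n (U.indicator u) (U ∪ W) :=
  (hu.congr eqOn_indicator).union_of_isOpen
    (contDiffOn_const.congr (eqOn_indicator_zero_of_eqOn_inter h)) hU hW

theorem eqOn_fderiv_indicator_union (hU : IsOpen U) (hW : IsOpen W) (h : EqOn u 0 (U ∩ W)) :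
    EqOn (fderiv 𝕜 (U.indicator u)) (U.indicator (fderiv 𝕜 u)) (U ∪ W) := by
  intro z hz
  by_cases hzU : z ∈ U
  · rw [indicator_of_mem hzU]
    exact (eqOn_indicator.eventuallyEq_of_mem (hU.mem_nhds hzU)).fderiv_eq
  · have hzW : W ∈ 𝓝 z := hW.mem_nhds (hz.resolve_left hzU)
    rw [indicator_of_notMem hzU,
      ((eqOn_indicator_zero_of_eqOn_inter h).eventuallyEq_of_mem hzW).fderiv_eq, fderiv_zero,
      Pi.zero_apply]

end ExtendByZero

section Translation

variable {E F : Type*} [NormedAddCommGroup E] [NormedSpace ℝ E]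
  [NormedAddCommGroup F] [NormedSpace ℝ F] {p : ℝ} {v : E → F} {V : Set E}

theorem enorm_add_sub_rpow_le_lintegral_fderiv (hp : 1 ≤ p) (hV : IsOpen V)
    (hv : ContDiffOn ℝ 1 v V) {z w : E} (hzw : segment ℝ z (z + w) ⊆ V) :
    ‖v (z + w) - v z‖ₑ ^ p ≤
      ‖w‖ₑ ^ p * ∫⁻ t in Icc (0 : ℝ) 1, ‖fderiv ℝ v (z + t • w)‖ₑ ^ p := by
  have hp₀ : 0 ≤ p := zero_le_one.trans hp
  have hmaps : MapsTo (fun t : ℝ ↦ z + t • w) (Icc 0 1) V := by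
    simpa only [segment_eq_image', add_sub_cancel_left, ← mapsTo_iff_image_subset] using hzw
  have hderiv : ∀ t ∈ Icc (0 : ℝ) 1,
      deriv (fun t : ℝ ↦ v (z + t • w)) t = fderiv ℝ v (z + t • w) w := fun t ht ↦ by
    have hline : HasDerivAt (fun t : ℝ ↦ z + t • w) w t := by
      simpa using ((hasDerivAt_id t).smul_const w).const_add z
    exact ((hv.differentiableOn one_ne_zero).differentiableAt
      (hV.mem_nhds (hmaps ht))).hasFDerivAt.comp_hasDerivAt t hline |>.deriv
  have hcont : ContinuousOn (fun t : ℝ ↦ ‖fderiv ℝ v (z + t • w)‖ₑ) (Icc 0 1) :=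
    ((hv.continuousOn_fderiv_of_isOpen hV le_rfl).comp (by fun_prop) hmaps).enorm
  have : IsProbabilityMeasure (volume.restrict (Icc (0 : ℝ) 1)) := ⟨by simp⟩
  calc ‖v (z + w) - v z‖ₑ ^ p
      ≤ (∫⁻ t in Icc (0 : ℝ) 1, ‖deriv (fun t : ℝ ↦ v (z + t • w)) t‖ₑ) ^ p := by
        gcongr
        simpa [Function.comp_def] using enorm_sub_le_lintegral_deriv_of_contDiffOn_Icc
          (hv.comp (by fun_prop : ContDiffOn ℝ 1 (fun t : ℝ ↦ z + t • w) (Icc 0 1)) hmaps)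
          zero_le_one
    _ ≤ (∫⁻ t in Icc (0 : ℝ) 1, ‖w‖ₑ * ‖fderiv ℝ v (z + t • w)‖ₑ) ^ p := by
        gcongr ?_ ^ p
        refine setLIntegral_mono' measurableSet_Icc fun t ht ↦ ?_
        rw [hderiv t ht, mul_comm]
        exact (fderiv ℝ v (z + t • w)).le_opENorm w
    _ = ‖w‖ₑ ^ p * (∫⁻ t in Icc (0 : ℝ) 1, ‖fderiv ℝ v (z + t • w)‖ₑ) ^ p := by
        rw [lintegral_const_mul' _ _ enorm_ne_top, ENNReal.mul_rpow_of_nonneg _ _ hp₀]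
    _ ≤ ‖w‖ₑ ^ p * ∫⁻ t in Icc (0 : ℝ) 1, ‖fderiv ℝ v (z + t • w)‖ₑ ^ p := by
        gcongr
        exact rpow_lintegral_le_lintegral_rpow hp (hcont.aemeasurable measurableSet_Icc)

variable [MeasurableSpace E] [BorelSpace E] [SecondCountableTopology E]
  {μ : Measure E} [μ.IsAddRightInvariant] [SFinite μ]

theorem lintegral_lintegral_add_smul {f : E → ℝ≥0∞} (hf : Measurable f) (w : E)
    (ν : Measure ℝ) [SFinite ν] :
    ∫⁻ z, ∫⁻ t, f (z + t • w) ∂ν ∂μ = ν univ * ∫⁻ z, f z ∂μ := by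
  have hline : Measurable fun q : E × ℝ ↦ f (q.1 + q.2 • w) := hf.comp (by fun_prop)
  rw [lintegral_lintegral_swap (f := fun z t ↦ f (z + t • w)) hline.aemeasurable]
  simp only [lintegral_add_right_eq_self, lintegral_const, mul_comm]

theorem setLIntegral_enorm_add_sub_rpow_le (hp : 1 ≤ p) (hV : IsOpen V) (hv : ContDiffOn ℝ 1 v V)
    {A : Set E} (hA : MeasurableSet A) {w : E} (hAV : ∀ z ∈ A, segment ℝ z (z + w) ⊆ V) :
    ∫⁻ z in A, ‖v (z + w) - v z‖ₑ ^ p ∂μ ≤ ‖w‖ₑ ^ p * ∫⁻ z in V, ‖fderiv ℝ v z‖ₑ ^ p ∂μ := by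
  classical
  let φ : E → ℝ≥0∞ := V.indicator fun z ↦ ‖fderiv ℝ v z‖ₑ ^ p
  have hφ : Measurable φ := by
    have hcont : ContinuousOn (fun z ↦ ‖fderiv ℝ v z‖ₑ ^ p) V :=
      ENNReal.continuous_rpow_const.comp_continuousOn
        (hv.continuousOn_fderiv_of_isOpen hV le_rfl).enorm
    rw [show φ = V.piecewise (fun z ↦ ‖fderiv ℝ v z‖ₑ ^ p) 0 from piecewise_eq_indicator.symm]
    exact hcont.measurable_piecewise continuousOn_const hV.measurableSet
  calc ∫⁻ z in A, ‖v (z + w) - v z‖ₑ ^ p ∂μ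
      ≤ ∫⁻ z in A, ‖w‖ₑ ^ p * ∫⁻ t in Icc (0 : ℝ) 1, φ (z + t • w) ∂volume ∂μ := by
        refine setLIntegral_mono' hA fun z hz ↦
          (enorm_add_sub_rpow_le_lintegral_fderiv hp hV hv (hAV z hz)).trans_eq ?_
        congr 1
        refine setLIntegral_congr_fun measurableSet_Icc fun t ht ↦ ?_
        have hmem : z + t • w ∈ V := hAV z hz <| by
          rw [segment_eq_image']
          exact ⟨t, ht, by simp⟩
        simp only [φ, indicator_of_mem hmem]
    _ ≤ ‖w‖ₑ ^ p * ∫⁻ z, ∫⁻ t in Icc (0 : ℝ) 1, φ (z + t • w) ∂volume ∂μ := by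
        rw [lintegral_const_mul' _ _ (by finiteness)]
        gcongr
        exact Measure.restrict_le_self
    _ = ‖w‖ₑ ^ p * ∫⁻ z in V, ‖fderiv ℝ v z‖ₑ ^ p ∂μ := by
        rw [lintegral_lintegral_add_smul hφ, lintegral_indicator hV.measurableSet]
        simp

theorem setLIntegral_enorm_rpow_preimage_add_right_le (hp : 1 ≤ p) (hV : IsOpen V)
    (hv : ContDiffOn ℝ 1 v V) {B : Set E} (hB : MeasurableSet B) {w : E}
    (hBV : ∀ z ∈ (· + w) ⁻¹' B, segment ℝ z (z + w) ⊆ V) :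
    ∫⁻ z in (· + w) ⁻¹' B, ‖v z‖ₑ ^ p ∂μ ≤ 2 ^ (p - 1) *
      (∫⁻ z in B, ‖v z‖ₑ ^ p ∂μ + ‖w‖ₑ ^ p * ∫⁻ z in V, ‖fderiv ℝ v z‖ₑ ^ p ∂μ) := by
  have hA : MeasurableSet ((· + w) ⁻¹' B) := measurable_add_const w hB
  have hvA : AEMeasurable (fun z ↦ ‖v (z + w)‖ₑ ^ p) (μ.restrict ((· + w) ⁻¹' B)) := by
    have hcont : ContinuousOn (fun z ↦ v (z + w)) ((· + w) ⁻¹' B) :=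
      hv.continuousOn.comp (by fun_prop) fun z hz ↦ hBV z hz (right_mem_segment ℝ z _)
    exact (hcont.enorm.aemeasurable hA).pow_const p
  calc ∫⁻ z in (· + w) ⁻¹' B, ‖v z‖ₑ ^ p ∂μ
      ≤ ∫⁻ z in (· + w) ⁻¹' B,
          2 ^ (p - 1) * (‖v (z + w)‖ₑ ^ p + ‖v (z + w) - v z‖ₑ ^ p) ∂μ := by
        refine lintegral_mono fun z ↦ le_trans ?_ (ENNReal.rpow_add_le_mul_rpow_add_rpow _ _ hp)
        gcongr
        simpa using enorm_sub_le (a := v (z + w)) (b := v (z + w) - v z)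
    _ = 2 ^ (p - 1) * (∫⁻ z in B, ‖v z‖ₑ ^ p ∂μ +
          ∫⁻ z in (· + w) ⁻¹' B, ‖v (z + w) - v z‖ₑ ^ p ∂μ) := by
        rw [lintegral_const_mul' _ _ (by finiteness), lintegral_add_left' hvA,
          (measurePreserving_add_right μ w).setLIntegral_comp_preimage_emb
            (measurableEmbedding_addRight w) (fun z ↦ ‖v z‖ₑ ^ p) B]
    _ ≤ 2 ^ (p - 1) *
          (∫⁻ z in B, ‖v z‖ₑ ^ p ∂μ + ‖w‖ₑ ^ p * ∫⁻ z in V, ‖fderiv ℝ v z‖ₑ ^ p ∂μ) := by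
        gcongr
        exact setLIntegral_enorm_add_sub_rpow_le hp hV hv hA hBV

end Translation

section PoincareSet

variable {E F : Type*} [NormedAddCommGroup E] [NormedSpace ℝ E] [MeasurableSpace E]
  [NormedAddCommGroup F] [NormedSpace ℝ F] {p : ℝ} {μ : Measure E} {Ω : Set E} {𝓕 : Set (E → F)}

/-- `A` is a Poincaré set for the class `𝓕` if the `L^p` norm on `A` is controlled, uniformly over
`𝓕`, by the `L^p` norm of the gradient on the whole domain `Ω`. The set `A` need not lie in `Ω`, and
both sides may be infinite. -/
def IsPoincareSet (p : ℝ) (μ : Measure E) (Ω : Set E) (𝓕 : Set (E → F)) (A : Set E) : Prop :=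
  ∃ K : ℝ≥0, ∀ u ∈ 𝓕,
    ∫⁻ z in A, ‖u z‖ₑ ^ p ∂μ ≤ K * ∫⁻ z in Ω, ‖fderiv ℝ u z‖ₑ ^ p ∂μ

namespace IsPoincareSet

theorem mono {A B : Set E} (hAB : A ⊆ B) : IsPoincareSet p μ Ω 𝓕 B → IsPoincareSet p μ Ω 𝓕 A :=
  fun ⟨K, hK⟩ ↦ ⟨K, fun u hu ↦ (lintegral_mono_set hAB).trans (hK u hu)⟩

variable [BorelSpace E] [SecondCountableTopology E] [μ.IsAddRightInvariant] [SFinite μ]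

theorem preimage_add_right (hp : 1 ≤ p) (hΩ : IsOpen Ω) (h𝓕 : ∀ u ∈ 𝓕, ContDiffOn ℝ 1 u Ω)
    {B : Set E} (hB : IsPoincareSet p μ Ω 𝓕 B) (hBm : MeasurableSet B) {w : E}
    (hBΩ : ∀ z ∈ (· + w) ⁻¹' B, segment ℝ z (z + w) ⊆ Ω) :
    IsPoincareSet p μ Ω 𝓕 ((· + w) ⁻¹' B) := by
  obtain ⟨K, hK⟩ := hB
  refine ⟨2 ^ (p - 1) * (K + ‖w‖₊ ^ p), fun u hu ↦
    (setLIntegral_enorm_rpow_preimage_add_right_le hp hΩ (h𝓕 u hu) hBm hBΩ).trans ?_⟩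
  have hcoe : ((2 ^ (p - 1) * (K + ‖w‖₊ ^ p) : ℝ≥0) : ℝ≥0∞) = 2 ^ (p - 1) * (K + ‖w‖ₑ ^ p) := by
    rw [ENNReal.coe_mul, ENNReal.coe_add, ENNReal.coe_rpow_of_ne_zero two_ne_zero,
      ENNReal.coe_rpow_of_nonneg _ (zero_le_one.trans hp), ENNReal.coe_ofNat, enorm_eq_nnnorm]
  rw [hcoe, mul_assoc, add_mul]
  gcongr
  exact hK u hu

theorem ball_of_ball (hp : 1 ≤ p) (hΩ : IsOpen Ω) (h𝓕 : ∀ u ∈ 𝓕, ContDiffOn ℝ 1 u Ω)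
    {x y : E} {r s : ℝ} (hy : IsPoincareSet p μ Ω 𝓕 (ball y s)) (hr : ball x r ⊆ Ω)
    (hyr : dist y x + s ≤ r) : IsPoincareSet p μ Ω 𝓕 (ball x s) := by
  have hball : (· + (y - x)) ⁻¹' ball y s = ball x s := by
    simp
  rw [← hball]
  refine hy.preimage_add_right hp hΩ h𝓕 measurableSet_ball fun z hz ↦
    ((convex_ball x r).segment_subset ?_ ?_).trans hr
  · exact ball_subset_ball (by linarith [dist_nonneg (x := y) (y := x)]) (hball ▸ hz)
  · exact ball_subset_ball' (by linarith) hz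

theorem exists_mem_nhds (hp : 1 ≤ p) (hΩ : IsOpen Ω) (hconn : IsPreconnected Ω)
    (h𝓕 : ∀ u ∈ 𝓕, ContDiffOn ℝ 1 u Ω) {O : Set E} (hO : IsPoincareSet p μ Ω 𝓕 O)
    (hOo : IsOpen O) (hΩO : (Ω ∩ O).Nonempty) :
    ∀ x ∈ Ω, ∃ A ∈ 𝓝 x, IsPoincareSet p μ Ω 𝓕 A := by
  let S : Set E := {x | ∃ A ∈ 𝓝 x, IsPoincareSet p μ Ω 𝓕 A}
  have hS : IsOpen S := isOpen_iff_mem_nhds.2 fun x ⟨A, hA, hAP⟩ ↦ by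
    filter_upwards [eventually_mem_nhds_iff.2 hA] with y hy using ⟨A, hy, hAP⟩
  have hOS : O ⊆ S := fun x hx ↦ ⟨O, hOo.mem_nhds hx, hO⟩
  refine hconn.subset_of_closure_inter_subset hS (hΩO.mono (inter_subset_inter_right Ω hOS))
    fun x ⟨hxS, hxΩ⟩ ↦ ?_
  obtain ⟨r, hr, hrΩ⟩ := Metric.isOpen_iff.1 hΩ x hxΩ
  obtain ⟨y, ⟨A, hA, hAP⟩, hxy⟩ := Metric.mem_closure_iff.1 hxS (r / 2) (by positivity)
  obtain ⟨δ, hδ, hδA⟩ := Metric.mem_nhds_iff.1 hA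
  have hs : IsPoincareSet p μ Ω 𝓕 (ball y (min δ (r / 2))) :=
    hAP.mono ((ball_subset_ball (min_le_left _ _)).trans hδA)
  refine ⟨_, ball_mem_nhds x (by positivity), hs.ball_of_ball hp hΩ h𝓕 hrΩ ?_⟩
  rw [dist_comm]
  linarith [min_le_right δ (r / 2)]

theorem exists_weight (hp : 1 ≤ p) (hΩ : IsOpen Ω) (hconn : IsPreconnected Ω)
    (h𝓕 : ∀ u ∈ 𝓕, ContDiffOn ℝ 1 u Ω) {O : Set E} (hO : IsPoincareSet p μ Ω 𝓕 O)
    (hOo : IsOpen O) (hΩO : (Ω ∩ O).Nonempty) :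
    ∃ g : E → ℝ≥0, ∃ C > (0 : ℝ≥0), Measurable g ∧ (∀ z, g z ≤ 1) ∧ (∀ z ∈ Ω, 0 < g z) ∧
      (∀ z ∈ O, g z = 1) ∧ ∀ u ∈ 𝓕,
        ∫⁻ z in Ω, g z * ‖u z‖ₑ ^ p ∂μ ≤ C * ∫⁻ z in Ω, ‖fderiv ℝ u z‖ₑ ^ p ∂μ := by
  have hmeas (u : 𝓕) : AEMeasurable (fun z ↦ ‖u.1 z‖ₑ ^ p) (μ.restrict Ω) :=
    ((h𝓕 u u.2).continuousOn.enorm.aemeasurable hΩ.measurableSet).pow_const p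
  simpa only [Subtype.forall] using exists_weight_eq_one_on hOo.measurableSet hmeas
    (I := fun u : 𝓕 ↦ ∫⁻ z in Ω, ‖fderiv ℝ u.1 z‖ₑ ^ p ∂μ)
    (by simpa only [Subtype.forall, IsPoincareSet] using hO.exists_mem_nhds hp hΩ hconn h𝓕 hOo hΩO)
    (by simpa only [Subtype.forall, IsPoincareSet] using hO)

end IsPoincareSet

end PoincareSet

section Strip

variable {X : Type*} {η : X → ℝ} {h ε : ℝ}

/-- The strip of vertical width `h` directly below the graph of `η`, with both boundary graphs
excluded; for the `η` and `h` of the theorem it is the set `O₁`. -/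
def graphStrip (η : X → ℝ) (h : ℝ) : Set (X × ℝ) :=
  {z | η z.1 - h < z.2 ∧ z.2 < η z.1}

theorem isOpen_graphStrip [TopologicalSpace X] (hη : Continuous η) : IsOpen (graphStrip η h) :=
  (isOpen_lt (by fun_prop) continuous_snd).inter (isOpen_lt continuous_snd (by fun_prop))

theorem graphStrip_nonempty [Nonempty X] (hh : 0 < h) : (graphStrip η h).Nonempty :=
  let x : X := Classical.arbitrary X
  ⟨(x, η x - h / 2), by constructor <;> dsimp only <;> linarith⟩

theorem graphStrip_subset_graphStrip (hεh : ε ≤ h) : graphStrip η ε ⊆ graphStrip η h :=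
  fun _ hz ↦ ⟨by linarith [hz.1], hz.2⟩

variable [NormedAddCommGroup X] [NormedSpace ℝ X]

theorem segment_vertical_subset_of_mem_graphStrip (hε : 0 < ε) {z : X × ℝ}
    (hz : z ∈ graphStrip η h) :
    segment ℝ z (z + (0, h)) ⊆ graphStrip η h ∪ {q | η q.1 - ε < q.2} := by
  obtain ⟨x, y⟩ := z
  obtain ⟨hlow, hup⟩ : η x - h < y ∧ y < η x := hz
  rw [segment_eq_image']
  simp only [add_sub_cancel_left]
  rintro _ ⟨t, ⟨ht, -⟩, rfl⟩
  have hth : 0 ≤ t * h := mul_nonneg ht (by linarith)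
  simp only [graphStrip, Prod.smul_mk, smul_zero, smul_eq_mul,
    Prod.mk_add_mk, add_zero, mem_union, mem_ofPred_eq]
  rcases lt_or_ge (y + t * h) (η x) with hlt | hge
  · exact .inl ⟨by linarith, hlt⟩
  · exact .inr (by linarith)

variable [MeasurableSpace X] [BorelSpace X] [SecondCountableTopology X]
  {F : Type*} [NormedAddCommGroup F] [NormedSpace ℝ F] {p : ℝ} {μ : Measure (X × ℝ)}
  [μ.IsAddRightInvariant] [SFinite μ]

theorem setLIntegral_graphStrip_enorm_rpow_le (hp : 1 ≤ p) (hη : Continuous η) (hε : 0 < ε)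
    {u : X × ℝ → F} (hu : ContDiffOn ℝ 1 u (graphStrip η h)) (hu0 : EqOn u 0 (graphStrip η ε)) :
    ∫⁻ z in graphStrip η h, ‖u z‖ₑ ^ p ∂μ ≤
      ‖h‖ₑ ^ p * ∫⁻ z in graphStrip η h, ‖fderiv ℝ u z‖ₑ ^ p ∂μ := by
  set O := graphStrip η h
  let W : Set (X × ℝ) := {z | η z.1 - ε < z.2}
  have hO : IsOpen O := isOpen_graphStrip hη
  have hW : IsOpen W := isOpen_lt (by fun_prop) continuous_snd
  have huW : EqOn u 0 (O ∩ W) := fun z hz ↦ hu0 ⟨hz.2, hz.1.2⟩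
  have hp₀ : 0 < p := one_pos.trans_le hp
  calc ∫⁻ z in O, ‖u z‖ₑ ^ p ∂μ
      = ∫⁻ z in O, ‖O.indicator u (z + (0, h)) - O.indicator u z‖ₑ ^ p ∂μ := by
        refine setLIntegral_congr_fun hO.measurableSet fun z hz ↦ ?_
        have hzh : z + (0, h) ∉ O := fun hzh ↦ by
          have hlow : η z.1 - h < z.2 := hz.1
          have hup : z.2 + h < η (z.1 + 0) := hzh.2
          rw [add_zero] at hup
          linarith
        simp only [indicator_of_mem hz, indicator_of_notMem hzh, zero_sub, enorm_neg]
    _ ≤ ‖((0 : X), h)‖ₑ ^ p * ∫⁻ z in O ∪ W, ‖fderiv ℝ (O.indicator u) z‖ₑ ^ p ∂μ :=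
        setLIntegral_enorm_add_sub_rpow_le hp (hO.union hW)
          (contDiffOn_indicator_union hu hO hW huW) hO.measurableSet
          fun z hz ↦ segment_vertical_subset_of_mem_graphStrip hε hz
    _ = ‖h‖ₑ ^ p * ∫⁻ z in O ∪ W, O.indicator (fun z ↦ ‖fderiv ℝ u z‖ₑ ^ p) z ∂μ := by
        congr 1
        · simp [enorm_eq_nnnorm, Prod.nnnorm_mk]
        refine setLIntegral_congr_fun (hO.union hW).measurableSet fun z hz ↦ ?_
        rw [eqOn_fderiv_indicator_union hO hW huW hz]
        by_cases hzO : z ∈ O <;> simp [hzO, hp₀, enorm_eq_nnnorm]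
    _ = ‖h‖ₑ ^ p * ∫⁻ z in O, ‖fderiv ℝ u z‖ₑ ^ p ∂μ := by
        rw [setLIntegral_indicator hO.measurableSet, inter_eq_left.2 subset_union_left]

theorem weighted_poincare_general (hp : 1 ≤ p) (hη : Continuous η) (hh : 0 < h)
    {Ω : Set (X × ℝ)} (hΩ : IsOpen Ω) (hconn : IsPreconnected Ω) (hstrip : graphStrip η h ⊆ Ω) :
    ∃ g : X × ℝ → ℝ≥0, ∃ C > (0 : ℝ≥0),
      Measurable g ∧ (∀ z, g z ≤ 1) ∧ (∀ z ∈ Ω, 0 < g z) ∧ (∀ z ∈ graphStrip η h, g z = 1) ∧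
      ∀ u : X × ℝ → F, ContDiffOn ℝ 1 u Ω → (∃ ε > 0, EqOn u 0 (graphStrip η ε)) →
        ∫⁻ z in Ω, g z * ‖u z‖ₑ ^ p ∂μ ≤ C * ∫⁻ z in Ω, ‖fderiv ℝ u z‖ₑ ^ p ∂μ := by
  let 𝓕 : Set (X × ℝ → F) :=
    {u | ContDiffOn ℝ 1 u Ω ∧ ∃ ε > 0, EqOn u 0 (graphStrip η ε)}
  have hO : IsPoincareSet p μ Ω 𝓕 (graphStrip η h) := by
    refine ⟨‖h‖₊ ^ p, fun u ⟨hu, ε, hε, hu0⟩ ↦ ?_⟩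
    rw [ENNReal.coe_rpow_of_nonneg _ (zero_le_one.trans hp), ← enorm_eq_nnnorm]
    refine (setLIntegral_graphStrip_enorm_rpow_le hp hη hε (hu.mono hstrip) hu0).trans ?_
    gcongr
  obtain ⟨g, C, hC, hgm, hg1, hgpos, hgO, hg⟩ := hO.exists_weight hp hΩ hconn (fun u hu ↦ hu.1)
    (isOpen_graphStrip hη) ((graphStrip_nonempty hh).mono fun z hz ↦ ⟨hstrip hz, hz⟩)
  exact ⟨g, C, hC, hgm, hg1, hgpos, hgO, fun u hu hu0 ↦ hg u ⟨hu, hu0⟩⟩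

end Strip

/-- Weighted Poincaré inequality: there is a positive, measurable, locally bounded
weight `g`, equal to `1` on the strip `O₁`, and a constant `C > 0` such that
`∫_Ω g |u|² ≤ C ∫_Ω |∇u|²` for all admissible `u`. -/
theorem weighted_poincare
    (d : ℕ) (hd : 1 ≤ d)
    (η : EuclideanSpace ℝ (Fin d) → ℝ) (hη : Continuous η)
    (h : ℝ) (hh : 0 < h)
    (Ω₂ : Set (EuclideanSpace ℝ (Fin d) × ℝ)) (hΩ₂ : IsOpen Ω₂)
    (hstrip : {p : EuclideanSpace ℝ (Fin d) × ℝ | η p.1 - h ≤ p.2 ∧ p.2 ≤ η p.1} ⊆ Ω₂)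
    (Ω : Set (EuclideanSpace ℝ (Fin d) × ℝ))
    (hΩ : Ω = {p : EuclideanSpace ℝ (Fin d) × ℝ | p.2 < η p.1} ∩ Ω₂)
    (hconn : IsConnected Ω) :
    ∃ g : EuclideanSpace ℝ (Fin d) × ℝ → ℝ, ∃ C > (0 : ℝ),
      Measurable g ∧
      (∀ p ∈ Ω, ∃ M : ℝ, ∀ᶠ q in nhdsWithin p Ω, g q ≤ M) ∧
      (∀ p ∈ Ω, 0 < g p) ∧
      (∀ p ∈ {p : EuclideanSpace ℝ (Fin d) × ℝ | η p.1 - h < p.2 ∧ p.2 < η p.1}, g p = 1) ∧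
      ∀ u : EuclideanSpace ℝ (Fin d) × ℝ → ℝ,
        ContDiffOn ℝ 1 u Ω →
        (∫⁻ p in Ω, ENNReal.ofReal (‖fderiv ℝ u p‖ ^ 2)) < ⊤ →
        (∃ ε ∈ Ioo (0 : ℝ) h, ∀ p ∈ Ω, η p.1 - ε < p.2 → u p = 0) →
        ∫⁻ p in Ω, ENNReal.ofReal (g p * u p ^ 2)
          ≤ ENNReal.ofReal C * ∫⁻ p in Ω, ENNReal.ofReal (‖fderiv ℝ u p‖ ^ 2) := by
  have hgraph : Continuous fun z : EuclideanSpace ℝ (Fin d) × ℝ ↦ η z.1 := by fun_prop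
  have hΩo : IsOpen Ω := hΩ ▸ (isOpen_lt continuous_snd hgraph).inter hΩ₂
  have hO : graphStrip η h ⊆ Ω := hΩ ▸ fun z hz ↦ ⟨hz.2, hstrip ⟨hz.1.le, hz.2.le⟩⟩
  obtain ⟨g, C, hC, hgm, hg1, hgpos, hgO, hg⟩ := weighted_poincare_general (F := ℝ)
    (μ := volume.prod volume) one_le_two hη hh hΩo hconn.isPreconnected hO
  refine ⟨fun z ↦ g z, C, hC, hgm.coe_nnreal_real, fun z _ ↦ ⟨1, .of_forall hg1⟩, hgpos,
    fun z hz ↦ congrArg _ (hgO z hz), fun u hu _ ⟨ε, hε, hu0⟩ ↦ ?_⟩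
  have hu0' : EqOn u 0 (graphStrip η ε) := fun z hz ↦
    hu0 z (hO (graphStrip_subset_graphStrip hε.2.le hz)) hz.1
  simpa [← Measure.volume_eq_prod, ofReal_sq_eq_enorm_sq, ENNReal.ofReal_mul]
    using hg u hu ⟨ε, hε.1, hu0'⟩
end

section
/- For every d ≥ 1, every x ∈ ℝ^d and every ξ ≠ 0 one has Im λ⁽⁰⁾(x,ξ) = −(1/2) Σ_{j=1}^d ∂_{ξ_j}∂_{x_j} λ⁽¹⁾(x,ξ). -/
/-- Partial derivative of `f` at `x` in the `j`-th coordinate direction. -/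
noncomputable def pd {d : ℕ} {F : Type*} [NormedAddCommGroup F] [NormedSpace ℝ F]
    (j : Fin d) (f : EuclideanSpace ℝ (Fin d) → F) (x : EuclideanSpace ℝ (Fin d)) : F :=
  fderiv ℝ f x (EuclideanSpace.single j 1)

/-- The principal symbol of the Dirichlet–Neumann operator. -/
noncomputable def lam1 {d : ℕ} (η : EuclideanSpace ℝ (Fin d) → ℝ)
    (x ξ : EuclideanSpace ℝ (Fin d)) : ℝ :=
  Real.sqrt ((1 + ∑ j, (pd j η x) ^ 2) * ‖ξ‖ ^ 2 - (∑ j, pd j η x * ξ j) ^ 2)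

noncomputable def alpha1 {d : ℕ} (η : EuclideanSpace ℝ (Fin d) → ℝ)
    (x ξ : EuclideanSpace ℝ (Fin d)) : ℂ :=
  ((lam1 η x ξ : ℂ) + Complex.I * ((∑ j, pd j η x * ξ j : ℝ) : ℂ))
    / ((1 + ∑ j, (pd j η x) ^ 2 : ℝ) : ℂ)

/-- The sub-principal symbol of the Dirichlet–Neumann operator. -/
noncomputable def lam0 {d : ℕ} (η : EuclideanSpace ℝ (Fin d) → ℝ)
    (x ξ : EuclideanSpace ℝ (Fin d)) : ℂ :=
  ((1 + ∑ j, (pd j η x) ^ 2 : ℝ) : ℂ) / (2 * (lam1 η x ξ : ℂ)) *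
    ((∑ j, pd j (fun x' => alpha1 η x' ξ * ((pd j η x' : ℝ) : ℂ)) x)
      + Complex.I * ∑ j, ((pd j (fun ξ' => lam1 η x ξ') ξ : ℝ) : ℂ)
          * pd j (fun x' => alpha1 η x' ξ) x)

/-!
Write `G = 1 + |∇η|²`, `s = ∇η·ξ`, `λ = λ⁽¹⁾`, so that `α⁽¹⁾ = (λ + i s) / G` and
`λ² = G|ξ|² - s²`. Differentiating the last relation once in `ξ_j`, and in `x_j` and then `ξ_j`,
gives `λ ∂_{ξ_j}λ = G ξ_j - s ∂_jη` and
`λ ∂_{ξ_j}∂_{x_j}λ + ∂_{ξ_j}λ ∂_{x_j}λ = ξ_j ∂_jG - ∂_j(s ∂_jη)`.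
On the other hand `Im λ⁽⁰⁾ = G/(2λ) ∑_j (∂_j(s ∂_jη / G) + ∂_{ξ_j}λ ∂_{x_j}(λ / G))`. After
expanding the quotients, the first relation removes every `1 / G`, and the second turns the `j`-th
summand into `-½ ∂_{ξ_j}∂_{x_j}λ`; the identity thus holds term by term in `j`.
-/

open scoped Topology

section Differentiability

variable {E K : Type*} [NormedAddCommGroup E] [NormedSpace ℝ E]
  [NormedField K] [NormedAlgebra ℝ K] {x : E}

theorem differentiableAt_div {f g : E → K}
    (hf : DifferentiableAt ℝ f x) (hg : DifferentiableAt ℝ g x) (hx : g x ≠ 0) :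
    DifferentiableAt ℝ (fun y => f y / g y) x := by
  simpa only [div_eq_mul_inv] using hf.fun_mul (hg.fun_inv hx)

theorem differentiableAt_ofReal_comp {f : E → ℝ} (hf : DifferentiableAt ℝ f x) :
    DifferentiableAt ℝ (fun y => (f y : ℂ)) x :=
  Complex.ofRealCLM.differentiableAt.comp x hf

end Differentiability

variable {d : ℕ}

section PartialDerivative

variable {F F' A K : Type*} [NormedAddCommGroup F] [NormedSpace ℝ F]
  [NormedAddCommGroup F'] [NormedSpace ℝ F'] [NormedCommRing A] [NormedAlgebra ℝ A]
  [NormedField K] [NormedAlgebra ℝ K]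
  {j : Fin d} {x : EuclideanSpace ℝ (Fin d)}

theorem pd_congr {f g : EuclideanSpace ℝ (Fin d) → F} (h : f =ᶠ[𝓝 x] g) :
    pd j f x = pd j g x := by
  rw [pd, pd, h.fderiv_eq]

theorem pd_clm_comp (L : F →L[ℝ] F') {f : EuclideanSpace ℝ (Fin d) → F}
    (hf : DifferentiableAt ℝ f x) : pd j (fun y => L (f y)) x = L (pd j f x) := by
  simp [pd, fderiv_fun_comp x L.differentiableAt hf]

theorem pd_sub {f g : EuclideanSpace ℝ (Fin d) → F}
    (hf : DifferentiableAt ℝ f x) (hg : DifferentiableAt ℝ g x) :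
    pd j (fun y => f y - g y) x = pd j f x - pd j g x := by
  simp [pd, fderiv_fun_sub hf hg]

theorem pd_sum {ι : Type*} {s : Finset ι} {f : ι → EuclideanSpace ℝ (Fin d) → F}
    (hf : ∀ i ∈ s, DifferentiableAt ℝ (f i) x) :
    pd j (fun y => ∑ i ∈ s, f i y) x = ∑ i ∈ s, pd j (f i) x := by
  simp [pd, fderiv_fun_sum hf]

theorem pd_mul {f g : EuclideanSpace ℝ (Fin d) → A}
    (hf : DifferentiableAt ℝ f x) (hg : DifferentiableAt ℝ g x) :
    pd j (fun y => f y * g y) x = f x * pd j g x + g x * pd j f x := by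
  simp [pd, fderiv_fun_mul hf hg]

theorem pd_const_mul {f : EuclideanSpace ℝ (Fin d) → A} (hf : DifferentiableAt ℝ f x) (c : A) :
    pd j (fun y => c * f y) x = c * pd j f x := by
  simp [pd, fderiv_const_mul hf]

theorem pd_mul_const {f : EuclideanSpace ℝ (Fin d) → A} (hf : DifferentiableAt ℝ f x) (c : A) :
    pd j (fun y => f y * c) x = pd j f x * c := by
  simpa only [mul_comm c] using pd_const_mul hf c

theorem pd_sq {f : EuclideanSpace ℝ (Fin d) → A} (hf : DifferentiableAt ℝ f x) :
    pd j (fun y => f y ^ 2) x = 2 * f x * pd j f x := by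
  simp only [pow_two, pd_mul hf hf]
  ring

theorem pd_div {f g : EuclideanSpace ℝ (Fin d) → K}
    (hf : DifferentiableAt ℝ f x) (hg : DifferentiableAt ℝ g x) (hx : g x ≠ 0) :
    pd j (fun y => f y / g y) x = (g x * pd j f x - f x * pd j g x) / g x ^ 2 := by
  have hcancel : (fun y => f y / g y * g y) =ᶠ[𝓝 x] f :=
    (hg.continuousAt.eventually_ne hx).mono fun y hy => div_mul_cancel₀ _ hy
  have hprod := pd_mul (j := j) (differentiableAt_div hf hg hx) hg
  rw [pd_congr hcancel] at hprod
  rw [hprod]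
  field_simp
  ring

theorem pd_norm_sq : pd j (fun ξ => ‖ξ‖ ^ 2) x = 2 * x j := by
  simp [pd, (hasStrictFDerivAt_norm_sq x).hasFDerivAt.fderiv, EuclideanSpace.inner_single_right]

theorem pd_sum_mul_apply (c : Fin d → ℝ) :
    pd j (fun ξ : EuclideanSpace ℝ (Fin d) => ∑ k, c k * ξ k) x = c j := by
  let L : EuclideanSpace ℝ (Fin d) →L[ℝ] ℝ := ∑ k, c k • EuclideanSpace.proj k
  have hL : (fun ξ : EuclideanSpace ℝ (Fin d) => ∑ k, c k * ξ k) = L := by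
    ext ξ
    simp [L]
  rw [hL, pd, L.fderiv]
  simp [L]

end PartialDerivative

/-- The determinant `1 + |∇η|²` of the metric induced on the graph of `η`: the
denominator of `alpha1` and the coefficient of `‖ξ‖ ^ 2` in `lam1 η x ξ ^ 2`. -/
noncomputable def graphMetricDet (η : EuclideanSpace ℝ (Fin d) → ℝ)
    (x : EuclideanSpace ℝ (Fin d)) : ℝ :=
  1 + ∑ j, (pd j η x) ^ 2

/-- The slope `∇η(x)·ξ` of the graph of `η` at `x` in the direction `ξ`: the imaginary part of
the numerator of `alpha1`. -/
noncomputable def graphSlope (η : EuclideanSpace ℝ (Fin d) → ℝ)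
    (x ξ : EuclideanSpace ℝ (Fin d)) : ℝ :=
  ∑ j, pd j η x * ξ j

section Symbol

variable (η : EuclideanSpace ℝ (Fin d) → ℝ) (x ξ : EuclideanSpace ℝ (Fin d))

theorem graphMetricDet_pos : 0 < graphMetricDet η x := by
  unfold graphMetricDet
  positivity

theorem graphSlope_sq_le : graphSlope η x ξ ^ 2 ≤ (graphMetricDet η x - 1) * ‖ξ‖ ^ 2 := by
  rw [EuclideanSpace.real_norm_sq_eq, graphMetricDet, add_sub_cancel_left]
  exact Finset.sum_mul_sq_le_sq_mul_sq Finset.univ (fun k => pd k η x) ξ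

theorem lam1_sq : lam1 η x ξ ^ 2 = graphMetricDet η x * ‖ξ‖ ^ 2 - graphSlope η x ξ ^ 2 := by
  refine Real.sq_sqrt (sub_nonneg.2 ?_)
  change graphSlope η x ξ ^ 2 ≤ graphMetricDet η x * ‖ξ‖ ^ 2
  nlinarith [graphSlope_sq_le η x ξ, sq_nonneg ‖ξ‖]

theorem norm_le_lam1 : ‖ξ‖ ≤ lam1 η x ξ := by
  refine le_of_sq_le_sq ?_ (Real.sqrt_nonneg _)
  linarith [lam1_sq η x ξ, graphSlope_sq_le η x ξ]

theorem alpha1_re : (alpha1 η x ξ).re = lam1 η x ξ / graphMetricDet η x := by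
  rw [alpha1, Complex.div_ofReal_re]
  simp [graphMetricDet]

theorem alpha1_im : (alpha1 η x ξ).im = graphSlope η x ξ / graphMetricDet η x := by
  rw [alpha1, Complex.div_ofReal_im]
  simp [graphMetricDet, graphSlope]

variable {ξ} {j : Fin d}

theorem lam1_pos (hξ : ξ ≠ 0) : 0 < lam1 η x ξ :=
  (norm_pos_iff.2 hξ).trans_le (norm_le_lam1 η x ξ)

theorem differentiableAt_graphSlope_freq : DifferentiableAt ℝ (graphSlope η x) ξ := by
  unfold graphSlope
  fun_prop

theorem pd_graphSlope_freq : pd j (graphSlope η x) ξ = pd j η x :=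
  pd_sum_mul_apply fun k => pd k η x

theorem differentiableAt_lam1_freq (hξ : ξ ≠ 0) : DifferentiableAt ℝ (lam1 η x) ξ :=
  have hrad : DifferentiableAt ℝ
      (fun ζ => graphMetricDet η x * ‖ζ‖ ^ 2 - graphSlope η x ζ ^ 2) ξ :=
    ((differentiableAt_id.norm_sq ℝ).const_mul _).sub ((differentiableAt_graphSlope_freq η x).pow 2)
  hrad.sqrt ((lam1_sq η _ _).symm.trans_ne (pow_pos (lam1_pos η x hξ) 2).ne')

theorem lam1_mul_pd_lam1_freq (hξ : ξ ≠ 0) :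
    lam1 η x ξ * pd j (lam1 η x) ξ
      = graphMetricDet η x * ξ j - graphSlope η x ξ * pd j η x := by
  have hs : DifferentiableAt ℝ (graphSlope η x) ξ := differentiableAt_graphSlope_freq η x
  have hN : DifferentiableAt ℝ (fun ζ : EuclideanSpace ℝ (Fin d) => ‖ζ‖ ^ 2) ξ :=
    differentiableAt_id.norm_sq ℝ
  have hsq := pd_sq (j := j) (differentiableAt_lam1_freq η x hξ)
  simp only [lam1_sq] at hsq
  rw [pd_sub (hN.const_mul _) (hs.fun_pow 2), pd_const_mul hN, pd_norm_sq, pd_sq hs,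
    pd_graphSlope_freq] at hsq
  linarith

variable {η x}

theorem differentiableAt_pd (hη : DifferentiableAt ℝ (fderiv ℝ η) x) :
    DifferentiableAt ℝ (pd j η) x :=
  hη.clm_apply (differentiableAt_const _)

theorem differentiableAt_graphMetricDet (hη : DifferentiableAt ℝ (fderiv ℝ η) x) :
    DifferentiableAt ℝ (graphMetricDet η) x :=
  (DifferentiableAt.fun_sum fun _ _ => (differentiableAt_pd hη).pow 2).const_add 1

theorem differentiableAt_graphSlope_space (hη : DifferentiableAt ℝ (fderiv ℝ η) x) :
    DifferentiableAt ℝ (fun y => graphSlope η y ξ) x :=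
  DifferentiableAt.fun_sum fun _ _ => (differentiableAt_pd hη).mul_const _

theorem pd_graphSlope_space (hη : DifferentiableAt ℝ (fderiv ℝ η) x) :
    pd j (fun y => graphSlope η y ξ) x = ∑ k, pd j (pd k η) x * ξ k := by
  simp only [graphSlope]
  rw [pd_sum fun _ _ => (differentiableAt_pd hη).mul_const _]
  exact Finset.sum_congr rfl fun k _ => pd_mul_const (differentiableAt_pd hη) (ξ k)

theorem differentiableAt_lam1_space (hη : DifferentiableAt ℝ (fderiv ℝ η) x) (hξ : ξ ≠ 0) :
    DifferentiableAt ℝ (fun y => lam1 η y ξ) x :=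
  have hrad : DifferentiableAt ℝ
      (fun y => graphMetricDet η y * ‖ξ‖ ^ 2 - graphSlope η y ξ ^ 2) x :=
    ((differentiableAt_graphMetricDet hη).mul_const _).sub
      ((differentiableAt_graphSlope_space hη).pow 2)
  hrad.sqrt ((lam1_sq η _ _).symm.trans_ne (pow_pos (lam1_pos η x hξ) 2).ne')

theorem lam1_mul_pd_lam1_space (hη : DifferentiableAt ℝ (fderiv ℝ η) x) (hξ : ξ ≠ 0) :
    lam1 η x ξ * pd j (fun y => lam1 η y ξ) x
      = pd j (graphMetricDet η) x / 2 * ‖ξ‖ ^ 2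
        - graphSlope η x ξ * pd j (fun y => graphSlope η y ξ) x := by
  have hG := differentiableAt_graphMetricDet hη
  have hs := differentiableAt_graphSlope_space (ξ := ξ) hη
  have hsq := pd_sq (j := j) (differentiableAt_lam1_space hη hξ)
  simp only [lam1_sq] at hsq
  rw [pd_sub (hG.mul_const _) (hs.fun_pow 2), pd_mul_const hG, pd_sq hs] at hsq
  linarith

theorem differentiableAt_alpha1_space (hη : DifferentiableAt ℝ (fderiv ℝ η) x) (hξ : ξ ≠ 0) :
    DifferentiableAt ℝ (fun y => alpha1 η y ξ) x :=
  differentiableAt_div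
    ((differentiableAt_ofReal_comp (differentiableAt_lam1_space hη hξ)).add
      ((differentiableAt_ofReal_comp (differentiableAt_graphSlope_space hη)).const_mul Complex.I))
    (differentiableAt_ofReal_comp (differentiableAt_graphMetricDet hη))
    (Complex.ofReal_ne_zero.2 (graphMetricDet_pos η x).ne')

theorem differentiableAt_pd_graphSlope_space_freq (hη : DifferentiableAt ℝ (fderiv ℝ η) x) :
    DifferentiableAt ℝ (fun ζ => pd j (fun y => graphSlope η y ζ) x) ξ := by
  simp only [pd_graphSlope_space hη]
  fun_prop

theorem pd_pd_graphSlope (hη : DifferentiableAt ℝ (fderiv ℝ η) x) (i : Fin d) :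
    pd i (fun ζ => pd j (fun y => graphSlope η y ζ) x) ξ = pd j (pd i η) x := by
  simp only [pd_graphSlope_space hη]
  exact pd_sum_mul_apply fun k => pd j (pd k η) x

theorem differentiableAt_pd_lam1_space_freq
    (hη : DifferentiableAt ℝ (fderiv ℝ η) x) (hξ : ξ ≠ 0) :
    DifferentiableAt ℝ (fun ζ => pd j (fun y => lam1 η y ζ) x) ξ := by
  have hquot : DifferentiableAt ℝ (fun ζ => (pd j (graphMetricDet η) x / 2 * ‖ζ‖ ^ 2
      - graphSlope η x ζ * pd j (fun y => graphSlope η y ζ) x) / lam1 η x ζ) ξ :=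
    differentiableAt_div
      (((differentiableAt_id.norm_sq ℝ).const_mul _).sub
        ((differentiableAt_graphSlope_freq η x).mul (differentiableAt_pd_graphSlope_space_freq hη)))
      (differentiableAt_lam1_freq η x hξ) (lam1_pos η x hξ).ne'
  refine hquot.congr_of_eventuallyEq ((eventually_ne_nhds hξ).mono fun ζ hζ => ?_)
  exact (eq_div_iff (lam1_pos η x hζ).ne').2 ((mul_comm _ _).trans (lam1_mul_pd_lam1_space hη hζ))

theorem lam1_mul_pd_pd_lam1 (hη : DifferentiableAt ℝ (fderiv ℝ η) x) (hξ : ξ ≠ 0) (i : Fin d) :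
    lam1 η x ξ * pd i (fun ζ => pd j (fun y => lam1 η y ζ) x) ξ
      + pd j (fun y => lam1 η y ξ) x * pd i (lam1 η x) ξ
      = pd j (graphMetricDet η) x * ξ i - (graphSlope η x ξ * pd j (pd i η) x
        + pd j (fun y => graphSlope η y ξ) x * pd i η x) := by
  have hs : DifferentiableAt ℝ (graphSlope η x) ξ := differentiableAt_graphSlope_freq η x
  have hs' := differentiableAt_pd_graphSlope_space_freq (j := j) (ξ := ξ) hη
  have hN : DifferentiableAt ℝ (fun ζ : EuclideanSpace ℝ (Fin d) => ‖ζ‖ ^ 2) ξ :=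
    differentiableAt_id.norm_sq ℝ
  have heq : (fun ζ => lam1 η x ζ * pd j (fun y => lam1 η y ζ) x) =ᶠ[𝓝 ξ] fun ζ =>
      pd j (graphMetricDet η) x / 2 * ‖ζ‖ ^ 2
        - graphSlope η x ζ * pd j (fun y => graphSlope η y ζ) x :=
    (eventually_ne_nhds hξ).mono fun ζ hζ => lam1_mul_pd_lam1_space hη hζ
  rw [← pd_mul (differentiableAt_lam1_freq η x hξ) (differentiableAt_pd_lam1_space_freq hη hξ),
    pd_congr heq, pd_sub (hN.const_mul _) (hs.fun_mul hs'), pd_const_mul hN, pd_norm_sq,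
    pd_mul hs hs', pd_pd_graphSlope hη, pd_graphSlope_freq]
  ring

theorem im_lam0 (hη : DifferentiableAt ℝ (fderiv ℝ η) x) (hξ : ξ ≠ 0) :
    (lam0 η x ξ).im = graphMetricDet η x / (2 * lam1 η x ξ) *
      ∑ j, (pd j (fun y => graphSlope η y ξ / graphMetricDet η y * pd j η y) x
        + pd j (lam1 η x) ξ * pd j (fun y => lam1 η y ξ / graphMetricDet η y) x) := by
  have hα := differentiableAt_alpha1_space hη hξ
  have hdiv (j : Fin d) :
      (pd j (fun y => alpha1 η y ξ * ((pd j η y : ℝ) : ℂ)) x).im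
        = pd j (fun y => graphSlope η y ξ / graphMetricDet η y * pd j η y) x := by
    have hg : DifferentiableAt ℝ (fun y => ((pd j η y : ℝ) : ℂ)) x :=
      differentiableAt_ofReal_comp (differentiableAt_pd hη)
    simpa [Complex.im_mul_ofReal, alpha1_im] using
      (pd_clm_comp (j := j) Complex.imCLM (hα.fun_mul hg)).symm
  have hre (j : Fin d) : (pd j (fun y => alpha1 η y ξ) x).re
      = pd j (fun y => lam1 η y ξ / graphMetricDet η y) x := by
    simpa [alpha1_re] using (pd_clm_comp (j := j) Complex.reCLM hα).symm
  have hfactor : ((1 + ∑ j, (pd j η x) ^ 2 : ℝ) : ℂ) / (2 * (lam1 η x ξ : ℂ))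
      = ((graphMetricDet η x / (2 * lam1 η x ξ) : ℝ) : ℂ) := by
    push_cast [graphMetricDet]
    rfl
  rw [lam0, hfactor, Complex.im_ofReal_mul, Complex.add_im, Complex.I_mul_im, Complex.im_sum,
    Complex.re_sum, Finset.sum_add_distrib]
  simp only [Complex.re_ofReal_mul, hdiv, hre]

theorem im_lam0_summand_eq (hη : DifferentiableAt ℝ (fderiv ℝ η) x) (hξ : ξ ≠ 0) :
    graphMetricDet η x / (2 * lam1 η x ξ) *
      (pd j (fun y => graphSlope η y ξ / graphMetricDet η y * pd j η y) x
        + pd j (lam1 η x) ξ * pd j (fun y => lam1 η y ξ / graphMetricDet η y) x)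
      = -(1 / 2) * pd j (fun ζ => pd j (fun y => lam1 η y ζ) x) ξ := by
  have hG := differentiableAt_graphMetricDet hη
  have hs := differentiableAt_graphSlope_space (ξ := ξ) hη
  have hG0 : graphMetricDet η x ≠ 0 := (graphMetricDet_pos η x).ne'
  have hl0 : lam1 η x ξ ≠ 0 := (lam1_pos η x hξ).ne'
  have hfreq := lam1_mul_pd_lam1_freq (j := j) η x hξ
  have hmixed := lam1_mul_pd_pd_lam1 (j := j) hη hξ j
  rw [pd_mul (differentiableAt_div hs hG hG0) (differentiableAt_pd hη), pd_div hs hG hG0,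
    pd_div (differentiableAt_lam1_space hη hξ) hG hG0]
  field_simp
  linear_combination graphMetricDet η x * hmixed - pd j (graphMetricDet η) x * hfreq

theorem im_subprincipal_symbol_general
    {η' : EuclideanSpace ℝ (Fin d) → EuclideanSpace ℝ (Fin d) →L[ℝ] ℝ}
    (hη : ∀ᶠ y in 𝓝 x, HasFDerivAt η (η' y) y) (hη' : DifferentiableAt ℝ η' x) (hξ : ξ ≠ 0) :
    (lam0 η x ξ).im = -(1 / 2) * ∑ j, pd j (fun ζ => pd j (fun y => lam1 η y ζ) x) ξ := by
  have hfderiv : DifferentiableAt ℝ (fderiv ℝ η) x :=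
    hη'.congr_of_eventuallyEq (hη.mono fun _ hy => hy.fderiv)
  rw [im_lam0 hfderiv hξ, Finset.mul_sum, Finset.mul_sum]
  exact Finset.sum_congr rfl fun j _ => im_lam0_summand_eq hfderiv hξ

end Symbol

/-- The identity `Im λ⁽⁰⁾ = −(1/2) Σ_j ∂_{ξ_j}∂_{x_j} λ⁽¹⁾`, reflecting the symmetry of the
Dirichlet–Neumann operator. -/
theorem im_subprincipal_symbol
    (d : ℕ) (hd : 1 ≤ d)
    (η : EuclideanSpace ℝ (Fin d) → ℝ) (hη : ContDiff ℝ 2 η) :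
    ∀ (x ξ : EuclideanSpace ℝ (Fin d)), ξ ≠ 0 →
      (lam0 η x ξ).im
        = -(1 / 2) * ∑ j, pd j (fun ξ' => pd j (fun x' => lam1 η x' ξ') x) ξ := by
  intro x ξ hξ
  have hη' : ContDiff ℝ 1 (fderiv ℝ η) := hη.fderiv_right (by norm_num)
  exact im_subprincipal_symbol_general
    (.of_forall fun y => (hη.differentiable two_ne_zero y).hasFDerivAt)
    (hη'.differentiable one_ne_zero x) hξ
end
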